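/- arXiv:2204.06865 — 2 statements merged into one kernel-verified Lean document; each statement's English description precedes it below -/
import Mathlib

section
/- Let A be a commutative noetherian ring. Then the big finitistic flat dimension of A equals the big finitistic injective dimension of A; that is, sup{ flatdim_A(M) : M an A-module with flatdim_A(M) < ∞ } = sup{ injdim_A(M) : M an A-module with injdim_A(M) < ∞ }. -/
/-!
STATEMENT 11: Let A be a commutative noetherian ring.  Then the big finitistic flat
dimension of A equals the big finitistic injective dimension of A:
sup{ flatdim_A(M) : flatdim_A(M) < ∞ } = sup{ injdim_A(M) : injdim_A(M) < ∞ }.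
-/

open CategoryTheory

universe u

/-- `Ext_A^i(M, N)` as an `A`-module. -/
noncomputable abbrev extGroup (A : Type u) [CommRing A] (M N : ModuleCat.{u} A) (i : ℕ) :
    ModuleCat A :=
  ((Ext A (ModuleCat.{u} A) i).obj (Opposite.op M)).obj N

/-- The projective dimension of an `A`-module `M`, defined as the least `n : ℕ∞` such that
`Ext_A^i(M, N) = 0` for every `A`-module `N` and every `i > n` (and `∞` if no such `n` exists). -/
noncomputable def projDim (A : Type u) [CommRing A] (M : ModuleCat.{u} A) : ℕ∞ :=
  sInf {n : ℕ∞ | ∀ (N : ModuleCat.{u} A) (i : ℕ), n < (i : ℕ∞) →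
    Subsingleton (extGroup A M N i)}

/-- `Tor^A_i(N, M)` as an `A`-module. -/
noncomputable abbrev torGroup (A : Type u) [CommRing A] (N M : ModuleCat.{u} A) (i : ℕ) :
    ModuleCat A :=
  ((Tor (ModuleCat.{u} A) i).obj N).obj M

/-- The flat dimension of an `A`-module `M`, defined as the least `n : ℕ∞` such that
`Tor^A_i(N, M) = 0` for every `A`-module `N` and every `i > n` (and `∞` if no such `n` exists). -/
noncomputable def flatDim (A : Type u) [CommRing A] (M : ModuleCat.{u} A) : ℕ∞ :=
  sInf {n : ℕ∞ | ∀ (N : ModuleCat.{u} A) (i : ℕ), n < (i : ℕ∞) →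
    Subsingleton (torGroup A N M i)}

/-- The injective dimension of an `A`-module `M`, defined as the least `n : ℕ∞` such that
`Ext_A^i(N, M) = 0` for every `A`-module `N` and every `i > n` (and `∞` if no such `n` exists). -/
noncomputable def injDim (A : Type u) [CommRing A] (M : ModuleCat.{u} A) : ℕ∞ :=
  sInf {n : ℕ∞ | ∀ (N : ModuleCat.{u} A) (i : ℕ), n < (i : ℕ∞) →
    Subsingleton (extGroup A N M i)}

/-!
Write `M⁺ = Hom_ℤ(M, ℚ/ℤ)`. Dualizing a projective resolution of `M` gives an injective resolution
of `M⁺`, so `Hom(N, P⁺) ≅ (N ⊗ P)⁺` yields `Ext^i(N, M⁺) ≅ Tor_i(N, M)⁺` and hence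
`flatdim M = injdim M⁺` over any commutative ring. Over a noetherian ring ideals are finitely
presented, so `I ⊗ M⁺ ≅ Hom(I, M)⁺`, and Baer's criterion shows that `M` is injective if and only
if `M⁺` is flat, i.e. if and only if `M⁺⁺` is injective. Dimension shifting gives
`injdim M = injdim M⁺⁺ = flatdim M⁺`. Thus `M ↦ M⁺` exchanges the two finite dimensions.
-/

section CharacterDuality

variable {A : Type*} [CommRing A] {X Y Z : Type*} [AddCommGroup X] [AddCommGroup Y]
  [AddCommGroup Z] [Module A X] [Module A Y] [Module A Z] {f : X →ₗ[A] Y} {g : Y →ₗ[A] Z}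

lemma exact_dual_of_exact (h : Function.Exact f g) :
    Function.Exact (CharacterModule.dual g) (CharacterModule.dual f) := by
  refine fun c ↦ ⟨fun hc ↦ ?_, ?_⟩
  · have ker_le : g.rangeRestrict.toAddMonoidHom.ker ≤ AddMonoidHom.ker c := fun y hy ↦ by
      obtain ⟨x, rfl⟩ := (h y).1 congr(($hy : Z))
      exact congr($hc x)
    let b : CharacterModule (LinearMap.range g) :=
      AddMonoidHom.liftOfSurjective g.rangeRestrict.toAddMonoidHom g.surjective_rangeRestrict
        ⟨c, ker_le⟩
    obtain ⟨d, hd⟩ :=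
      CharacterModule.dual_surjective_of_injective _ (LinearMap.range g).subtype_injective b
    refine ⟨d, DFunLike.ext _ _ fun y ↦ ?_⟩
    calc d (g y) = b (g.rangeRestrict y) := congr($hd (g.rangeRestrict y))
      _ = c y := AddMonoidHom.liftOfRightInverse_comp_apply _ _ _ _ y
  · rintro ⟨d, rfl⟩
    rw [← LinearMap.comp_apply, ← CharacterModule.dual_comp, h.linearMap_comp_eq_zero,
      CharacterModule.dual_zero, LinearMap.zero_apply]

lemma exact_of_exact_dual (h : Function.Exact (CharacterModule.dual g) (CharacterModule.dual f)) :
    Function.Exact f g := by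
  refine fun y ↦ ⟨fun hy ↦ ?_, ?_⟩
  · rw [← LinearMap.coe_range, SetLike.mem_coe, ← Submodule.Quotient.mk_eq_zero]
    refine CharacterModule.eq_zero_of_character_apply fun c ↦ ?_
    have hc : CharacterModule.dual f (CharacterModule.dual (LinearMap.range f).mkQ c) = 0 := by
      rw [← LinearMap.comp_apply, ← CharacterModule.dual_comp, LinearMap.range_mkQ_comp,
        CharacterModule.dual_zero, LinearMap.zero_apply]
    obtain ⟨d, hd⟩ := (h _).1 hc
    calc c (Submodule.Quotient.mk y) = d (g y) := congr($hd y).symm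
      _ = 0 := by rw [hy, map_zero]
  · rintro ⟨x, rfl⟩
    exact CharacterModule.eq_zero_of_character_apply fun c ↦
      congr($(h.apply_apply_eq_zero c) x)

lemma exact_dual_iff :
    Function.Exact (CharacterModule.dual g) (CharacterModule.dual f) ↔ Function.Exact f g :=
  ⟨exact_of_exact_dual, exact_dual_of_exact⟩

end CharacterDuality

section CharacterComplexes

variable {A : Type u} [CommRing A]

/-- The character module `M⁺ = Hom_ℤ(M, ℚ/ℤ)`, as an object of `ModuleCat A`. -/
noncomputable abbrev characterModule (M : ModuleCat.{u} A) : ModuleCat.{u} A :=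
  ModuleCat.of A (CharacterModule M)

/-- The morphism `N⁺ ⟶ M⁺` obtained by precomposing characters with `f : M ⟶ N`. -/
noncomputable abbrev characterMap {M N : ModuleCat.{u} A} (f : M ⟶ N) :
    characterModule N ⟶ characterModule M :=
  ModuleCat.ofHom (CharacterModule.dual f.hom)

lemma characterMap_comp {L M N : ModuleCat.{u} A} (f : L ⟶ M) (g : M ⟶ N) :
    characterMap (f ≫ g) = characterMap g ≫ characterMap f :=
  rfl

lemma characterMap_zero {M N : ModuleCat.{u} A} : characterMap (0 : M ⟶ N) = 0 :=
  ModuleCat.hom_ext CharacterModule.dual_zero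

/-- The short complex `X₃⁺ ⟶ X₂⁺ ⟶ X₁⁺` of character modules. -/
noncomputable abbrev characterShortComplex (S : ShortComplex (ModuleCat.{u} A)) :
    ShortComplex (ModuleCat.{u} A) :=
  ShortComplex.mk (characterMap S.g) (characterMap S.f)
    (by rw [← characterMap_comp, S.zero, characterMap_zero])

variable {S : ShortComplex (ModuleCat.{u} A)}

lemma exact_characterShortComplex (hS : S.Exact) : (characterShortComplex S).Exact := by
  rw [ShortComplex.ShortExact.moduleCat_exact_iff_function_exact] at hS ⊢
  exact exact_dual_of_exact hS

lemma shortExact_characterShortComplex (hS : S.ShortExact) :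
    (characterShortComplex S).ShortExact where
  exact := exact_characterShortComplex hS.exact
  mono_f := (ModuleCat.mono_iff_injective _).2 <|
    CharacterModule.dual_injective_of_surjective _ hS.moduleCat_surjective_g
  epi_g := (ModuleCat.epi_iff_surjective _).2 <|
    CharacterModule.dual_surjective_of_injective _ hS.moduleCat_injective_f

lemma injective_characterModule_iff_flat {M : ModuleCat.{u} A} :
    Injective (characterModule M) ↔ Module.Flat A M := by
  rw [Module.Flat.iff_characterModule_injective, Module.injective_iff_injective_object]

/-- The cochain complex `K₀⁺ ⟶ K₁⁺ ⟶ ⋯` of character modules of a chain complex `K`. -/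
noncomputable abbrev characterComplex (K : ChainComplex (ModuleCat.{u} A) ℕ) :
    CochainComplex (ModuleCat.{u} A) ℕ where
  X i := characterModule (K.X i)
  d i j := characterMap (K.d j i)
  shape i j h := by rw [K.shape _ _ h, characterMap_zero]
  d_comp_d' i j k _ _ := by rw [← characterMap_comp, K.d_comp_d, characterMap_zero]

open CochainComplex in
/-- The injective resolution `M⁺ ⟶ P₀⁺ ⟶ P₁⁺ ⟶ ⋯` dual to a projective resolution `P` of `M`. -/
noncomputable def characterResolution {M : ModuleCat.{u} A} (P : ProjectiveResolution M) :
    InjectiveResolution (characterModule M) where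
  cocomplex := characterComplex P.complex
  injective i :=
    have : Module.Projective A (P.complex.X i) := (IsProjective.iff_projective _).2 (P.projective i)
    injective_characterModule_iff_flat.2 inferInstance
  ι := (fromSingle₀Equiv _ _).symm
    ⟨(characterShortComplex (.mk _ _ P.complex_d_comp_π_f_zero)).f,
      (characterShortComplex (.mk _ _ P.complex_d_comp_π_f_zero)).zero⟩
  quasiIso := ⟨fun
    | 0 => by
      rw [quasiIsoAt₀_iff, ShortComplex.quasiIso_iff_of_zeros _ rfl rfl
        ((characterComplex P.complex).shape _ _ (by simp))]
      exact ⟨exact_characterShortComplex P.exact₀,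
        (ModuleCat.mono_iff_injective _).2 <| CharacterModule.dual_injective_of_surjective _ <|
          (ModuleCat.epi_iff_surjective (P.π.f 0)).1 inferInstance⟩
    | n + 1 => by
      rw [quasiIsoAt_iff_exactAt _ _ (exactAt_succ_single_obj _ _),
        HomologicalComplex.exactAt_iff' _ n (n + 1) (n + 2) (by simp) (by simp)]
      exact exact_characterShortComplex (P.exact_succ n)⟩

end CharacterComplexes

section ExtOfResolution

open Abelian

universe w v u₁

variable {C : Type u₁} [Category.{v} C] [Abelian C] [HasExt.{w} C] {X Y : C}

lemma subsingleton_ext_succ_iff_of_projectiveResolution (P : ProjectiveResolution X) (n : ℕ) :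
    Subsingleton (Ext X Y (n + 1)) ↔
      Function.Exact (Preadditive.leftComp Y (P.complex.d (n + 1) n))
        (Preadditive.leftComp Y (P.complex.d (n + 2) (n + 1))) := by
  rw [subsingleton_iff_forall_eq 0]
  refine ⟨fun h f ↦ ⟨fun hf ↦ (P.extMk_eq_zero_iff f _ rfl hf n rfl).1 (h _), ?_⟩, fun h e ↦ ?_⟩
  · rintro ⟨g, rfl⟩
    simp [Preadditive.leftComp]
  · obtain ⟨f, hf, rfl⟩ := P.extMk_surjective e (n + 2) rfl
    exact (P.extMk_eq_zero_iff f _ rfl hf n rfl).2 ((h f).1 hf)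

lemma subsingleton_ext_succ_iff_of_injectiveResolution (I : InjectiveResolution Y) (n : ℕ) :
    Subsingleton (Ext X Y (n + 1)) ↔
      Function.Exact (Preadditive.rightComp X (I.cocomplex.d n (n + 1)))
        (Preadditive.rightComp X (I.cocomplex.d (n + 1) (n + 2))) := by
  rw [subsingleton_iff_forall_eq 0]
  refine ⟨fun h f ↦ ⟨fun hf ↦ (I.extMk_eq_zero_iff f _ rfl hf n rfl).1 (h _), ?_⟩, fun h e ↦ ?_⟩
  · rintro ⟨g, rfl⟩
    simp [Preadditive.rightComp]
  · obtain ⟨f, hf, rfl⟩ := I.extMk_surjective e (n + 2) rfl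
    exact (I.extMk_eq_zero_iff f _ rfl hf n rfl).2 ((h f).1 hf)

end ExtOfResolution

section TorExtDuality

variable {A : Type u} [CommRing A]

lemma subsingleton_extGroup_succ_iff (N M : ModuleCat.{u} A) (n : ℕ) :
    Subsingleton (extGroup A N M (n + 1)) ↔ Subsingleton (Abelian.Ext.{u} N M (n + 1)) := by
  let P := projectiveResolution N
  rw [subsingleton_ext_succ_iff_of_projectiveResolution P, ← ModuleCat.isZero_iff_subsingleton,
    (P.isoExt (R := A) (n + 1) M).isZero_iff, ← HomologicalComplex.exactAt_iff_isZero_homology,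
    HomologicalComplex.exactAt_iff' _ n (n + 1) (n + 2) (by simp) (by simp),
    ShortComplex.ShortExact.moduleCat_exact_iff_function_exact]
  rfl

lemma subsingleton_torGroup_succ_iff (N : ModuleCat.{u} A) {M : ModuleCat.{u} A}
    (P : ProjectiveResolution M) (n : ℕ) :
    Subsingleton (torGroup A N M (n + 1)) ↔
      Function.Exact ((P.complex.d (n + 2) (n + 1)).hom.lTensor N)
        ((P.complex.d (n + 1) n).hom.lTensor N) := by
  let F := (MonoidalCategory.tensoringLeft (ModuleCat.{u} A)).obj N
  rw [← ModuleCat.isZero_iff_subsingleton]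
  refine (P.isoLeftDerivedObj F (n + 1)).isZero_iff.trans ?_
  rw [HomologicalComplex.homologyFunctor_obj, ← HomologicalComplex.exactAt_iff_isZero_homology,
    HomologicalComplex.exactAt_iff' _ (n + 2) (n + 1) n (by simp) (by simp),
    ShortComplex.ShortExact.moduleCat_exact_iff_function_exact]
  rfl

lemma exact_compRight_dual_iff {N X Y Z : Type*} [AddCommGroup N] [AddCommGroup X]
    [AddCommGroup Y] [AddCommGroup Z] [Module A N] [Module A X] [Module A Y] [Module A Z]
    {f : X →ₗ[A] Y} {g : Y →ₗ[A] Z} :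
    Function.Exact ((CharacterModule.dual g).compRight A (M := N))
        ((CharacterModule.dual f).compRight A) ↔
      Function.Exact (f.lTensor N) (g.lTensor N) := by
  refine Iff.trans ?_ exact_dual_iff
  exact Function.Exact.iff_of_ladder_linearEquiv (e₁ := CharacterModule.homEquiv.symm)
    (e₂ := CharacterModule.homEquiv.symm) (e₃ := CharacterModule.homEquiv.symm) rfl rfl

lemma exact_rightComp_iff_exact_compRight (N : ModuleCat.{u} A) {X Y Z : ModuleCat.{u} A}
    (f : X ⟶ Y) (g : Y ⟶ Z) :
    Function.Exact (Preadditive.rightComp N f) (Preadditive.rightComp N g) ↔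
      Function.Exact (f.hom.compRight A (M := N)) (g.hom.compRight A) :=
  (Function.Exact.iff_of_ladder_addEquiv (g₁₂ := (f.hom.compRight A).toAddMonoidHom)
    (g₂₃ := (g.hom.compRight A).toAddMonoidHom) ModuleCat.homAddEquiv ModuleCat.homAddEquiv
    ModuleCat.homAddEquiv rfl rfl).symm

lemma subsingleton_extGroup_characterModule_iff (N M : ModuleCat.{u} A) (n : ℕ) :
    Subsingleton (extGroup A N (characterModule M) (n + 1)) ↔
      Subsingleton (torGroup A N M (n + 1)) := by
  let P := projectiveResolution M
  rw [subsingleton_extGroup_succ_iff, subsingleton_torGroup_succ_iff N P,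
    subsingleton_ext_succ_iff_of_injectiveResolution (characterResolution P),
    exact_rightComp_iff_exact_compRight, ← exact_compRight_dual_iff]
  rfl

theorem flatDim_eq_injDim_characterModule (M : ModuleCat.{u} A) :
    flatDim A M = injDim A (characterModule M) := by
  unfold flatDim injDim
  congr 1
  ext d
  refine forall₂_congr fun N i ↦ ?_
  cases i with
  | zero => simp
  | succ i => rw [subsingleton_extGroup_characterModule_iff]

end TorExtDuality

section CharacterEvaluation

open TensorProduct

variable {A : Type*} [CommRing A]

/-- The natural map `N ⊗ M⁺ → Hom(N, M)⁺` sending `n ⊗ c` to the character `f ↦ c (f n)`. -/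
noncomputable def tensorCharacterEval (N M : Type*) [AddCommGroup N] [AddCommGroup M] [Module A N]
    [Module A M] : N ⊗[A] CharacterModule M →ₗ[A] CharacterModule (N →ₗ[A] M) :=
  TensorProduct.lift
    (CharacterModule.curry ∘ₗ CharacterModule.dual (TensorProduct.lift LinearMap.applyₗ)).flip

variable {N N' M : Type*} [AddCommGroup N] [AddCommGroup N'] [AddCommGroup M] [Module A N]
  [Module A N'] [Module A M]

lemma tensorCharacterEval_comp_rTensor (g : N →ₗ[A] N') :
    tensorCharacterEval N' M ∘ₗ g.rTensor (CharacterModule M) =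
      CharacterModule.dual (g.lcomp A M) ∘ₗ tensorCharacterEval N M :=
  TensorProduct.ext' fun _ _ ↦ rfl

lemma dual_dualTensorHom_comp_tensorCharacterEval :
    CharacterModule.dual (dualTensorHom A N M) ∘ₗ tensorCharacterEval N M =
      CharacterModule.homEquiv.toLinearMap ∘ₗ
        dualTensorHom A (Module.Dual A N) (CharacterModule M) ∘ₗ
          (Module.Dual.eval A N).rTensor (CharacterModule M) := by
  refine TensorProduct.ext' fun n c ↦ DFunLike.ext _ _ fun t ↦ ?_
  induction t with
  | zero => simp only [map_zero]
  | add s t hs ht => simp only [map_add, hs, ht]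
  | tmul φ m => rfl

lemma bijective_tensorCharacterEval_of_projective [Module.Finite A N] [Module.Projective A N] :
    Function.Bijective (tensorCharacterEval (A := A) N M) := by
  have bijective_dual : Function.Bijective (CharacterModule.dual (R := A)
      (A := Module.Dual A N ⊗[A] M) (B := N →ₗ[A] M) (dualTensorHom A N M)) :=
    CharacterModule.dual_bijective_iff_bijective.2 dualTensorHom_bijective
  rw [← bijective_dual.of_comp_iff', ← LinearMap.coe_comp,
    dual_dualTensorHom_comp_tensorCharacterEval]
  exact CharacterModule.homEquiv.bijective.comp <| dualTensorHom_bijective.comp <|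
    ((Module.evalEquiv A N).rTensor (CharacterModule M)).bijective

lemma bijective_tensorCharacterEval [Module.FinitePresentation A N] :
    Function.Bijective (tensorCharacterEval (A := A) N M) := by
  obtain ⟨_, _, g, f, hg, hfg⟩ := Module.FinitePresentation.exists_fin' A N
  exact LinearMap.bijective_of_surjective_of_bijective_of_right_exact
    (f.rTensor (CharacterModule M)) (g.rTensor (CharacterModule M))
    (CharacterModule.dual (f.lcomp A M)) (CharacterModule.dual (g.lcomp A M)) _ _ _
    (tensorCharacterEval_comp_rTensor f).symm (tensorCharacterEval_comp_rTensor g).symm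
    (rTensor_exact _ hfg hg)
    (exact_dual_of_exact (LinearMap.exact_lcomp_of_exact_of_surjective _ hfg hg))
    bijective_tensorCharacterEval_of_projective.2 bijective_tensorCharacterEval_of_projective
    (LinearMap.rTensor_surjective _ hg)
    (CharacterModule.dual_surjective_of_injective _ (LinearMap.lcomp_injective_of_surjective g hg))

lemma injective_rTensor_characterModule_iff [Module.FinitePresentation A N]
    [Module.FinitePresentation A N'] {f : N →ₗ[A] N'} :
    Function.Injective (f.rTensor (CharacterModule M)) ↔ Function.Surjective (f.lcomp A M) := by
  rw [← CharacterModule.dual_injective_iff_surjective,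
    ← (bijective_tensorCharacterEval (A := A) (N := N') (M := M)).injective.of_comp_iff,
    ← LinearMap.coe_comp, tensorCharacterEval_comp_rTensor, LinearMap.coe_comp,
    Function.Injective.of_comp_iff' _ bijective_tensorCharacterEval]

lemma baer_iff_surjective_lcomp :
    Module.Baer A M ↔ ∀ I : Ideal A, Function.Surjective (I.subtype.lcomp A M) := by
  simp only [Module.Baer, Function.Surjective, LinearMap.ext_iff, Subtype.forall]
  rfl

end CharacterEvaluation

section Noetherian

universe v

variable {A : Type u} [CommRing A] [IsNoetherianRing A]

lemma flat_characterModule_iff_injective [Small.{v} A] {M : Type v} [AddCommGroup M]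
    [Module A M] :
    Module.Flat A (CharacterModule M) ↔ Module.Injective A M := by
  rw [Module.Flat.iff_rTensor_injective', ← Module.Baer.iff_injective, baer_iff_surjective_lcomp]
  exact forall_congr' fun I ↦
    have := Module.finitePresentation_of_finite A I
    injective_rTensor_characterModule_iff

lemma injective_characterModule_characterModule_iff {M : ModuleCat.{u} A} :
    Injective (characterModule (characterModule M)) ↔ Injective M := by
  rw [injective_characterModule_iff_flat, flat_characterModule_iff_injective,
    Module.injective_iff_injective_object]

lemma hasInjectiveDimensionLE_characterModule_characterModule_iff (n : ℕ) :
    ∀ M : ModuleCat.{u} A, HasInjectiveDimensionLE (characterModule (characterModule M)) n ↔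
      HasInjectiveDimensionLE M n := by
  induction n with
  | zero =>
    intro M
    exact injective_iff_hasInjectiveDimensionLT_one.symm.trans <|
      injective_characterModule_characterModule_iff.trans <|
        injective_iff_hasInjectiveDimensionLT_one
  | succ n ih =>
    intro M
    obtain ⟨I⟩ := EnoughInjectives.presentation M
    have hS := I.shortExact_shortComplex
    have hS' := shortExact_characterShortComplex (shortExact_characterShortComplex hS)
    exact (hS'.hasInjectiveDimensionLT_X₃_iff n
      (injective_characterModule_characterModule_iff.2 I.injective)).symm.trans <|
        (ih _).trans (hS.hasInjectiveDimensionLT_X₃_iff n I.injective)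

end Noetherian

section InjectiveDimension

variable {A : Type u} [CommRing A]

lemma subsingleton_extGroup_of_injDim_lt (N : ModuleCat.{u} A) {M : ModuleCat.{u} A} {i : ℕ}
    (h : injDim A M < i) : Subsingleton (extGroup A N M i) := by
  obtain ⟨_, hn, hni⟩ := sInf_lt_iff.1 h
  exact hn N i hni

lemma injDim_le_coe_iff_hasInjectiveDimensionLE (M : ModuleCat.{u} A) (n : ℕ) :
    injDim A M ≤ n ↔ HasInjectiveDimensionLE M n := by
  rw [HasInjectiveDimensionLE, hasInjectiveDimensionLT_iff.{u}]
  refine ⟨fun h i hi N e ↦ ?_, fun h ↦ sInf_le fun N i hi ↦ ?_⟩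
  · obtain ⟨i, rfl⟩ := Nat.exists_eq_add_of_le' (n.succ_pos.trans_le hi)
    have := (subsingleton_extGroup_succ_iff N M i).1
      (subsingleton_extGroup_of_injDim_lt N (h.trans_lt (mod_cast hi)))
    exact Subsingleton.elim e 0
  · have hi : n < i := mod_cast hi
    obtain ⟨i, rfl⟩ := Nat.exists_eq_add_of_le' (n.zero_le.trans_lt hi)
    rw [subsingleton_extGroup_succ_iff, subsingleton_iff_forall_eq 0]
    exact h _ hi (Y := N)

theorem injDim_eq_flatDim_characterModule [IsNoetherianRing A] (M : ModuleCat.{u} A) :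
    injDim A M = flatDim A (characterModule M) := by
  rw [flatDim_eq_injDim_characterModule]
  refine eq_of_forall_ge_iff fun d ↦ ?_
  cases d with
  | top => simp only [le_top]
  | coe n =>
    rw [injDim_le_coe_iff_hasInjectiveDimensionLE, injDim_le_coe_iff_hasInjectiveDimensionLE,
      hasInjectiveDimensionLE_characterModule_characterModule_iff]

end InjectiveDimension

theorem bigFinitisticFlatDim_eq_bigFinitisticInjDim
    (A : Type u) [CommRing A] [IsNoetherianRing A] :
    sSup {d : ℕ∞ | ∃ M : ModuleCat.{u} A, flatDim A M ≠ ⊤ ∧ flatDim A M = d} =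
      sSup {d : ℕ∞ | ∃ M : ModuleCat.{u} A, injDim A M ≠ ⊤ ∧ injDim A M = d} := by
  congr 1
  ext d
  constructor
  · rintro ⟨M, hM, rfl⟩
    rw [flatDim_eq_injDim_characterModule] at hM ⊢
    exact ⟨characterModule M, hM, rfl⟩
  · rintro ⟨M, hM, rfl⟩
    rw [injDim_eq_flatDim_characterModule] at hM ⊢
    exact ⟨characterModule M, hM, rfl⟩
end

section
/- Let (A, m) be a commutative noetherian local ring. Then A is Cohen–Macaulay if and only if sup{ projdim_A(M) : M a nonzero finitely generated A-module with projdim_A(M) < ∞ } equals the Krull dimension of A. -/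
/-!
STATEMENT 13: Let (A, m) be a commutative noetherian local ring.  Then A is
Cohen–Macaulay (depth(A) = dim(A)) if and only if
sup{ projdim_A(M) : M nonzero finitely generated with projdim_A(M) < ∞ } = dim(A).
-/

open CategoryTheory

universe u

/-- The depth of a commutative local ring `A`: the least `i : ℕ` such that
`Ext_A^i(k, A) ≠ 0`, where `k` is the residue field of `A` (`∞` if no such `i` exists). -/
noncomputable def ringDepth (A : Type u) [CommRing A] [IsLocalRing A] : ℕ∞ :=
  sInf {n : ℕ∞ | ∃ i : ℕ, (i : ℕ∞) = n ∧
    ¬ Subsingleton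
      (extGroup A (ModuleCat.of A (IsLocalRing.ResidueField A)) (ModuleCat.of A A) i)}

/-!
For every noetherian local ring `A` the supremum of the finite projective dimensions equals the
depth `d`. Let `M` be finitely generated of projective dimension `n`. Replacing `M` by a minimal
first syzygy lowers the projective dimension by one, and the inclusion of the syzygy into the free
module vanishes on `Ext(k, -)` in the relevant degree, either because its entries lie in the
maximal ideal (free syzygy) or because the target is zero (degree below `d`). So the connecting
maps carry the nonvanishing of `Ext^d(k, -)` on the last, free syzygy down to `Ext^(d-n)(k, M) ≠ 0`
(Auslander–Buchsbaum), and `n ≤ d`. Conversely, by Rees' theorem the vanishing of `Ext^i(k, A)` for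
`i < n` yields a regular sequence of length `n`, whose quotient has projective dimension `n`.
-/

universe v w

section Ext

open Limits

variable {C : Type*} [Category* C] [Abelian C] [HasExt.{w} C] {X Y : C}

/- The complex has no term in degree `-1`, so in degree `0` only the zero cocycle is a
coboundary. -/
lemma projectiveResolution_extMk_zero_eq_zero_iff (P : ProjectiveResolution X)
    (f : P.complex.X 0 ⟶ Y) (hf : P.complex.d 1 0 ≫ f = 0) :
    P.extMk f 1 rfl hf = 0 ↔ f = 0 := by
  refine ⟨fun h => ?_, fun h => by simp [h]⟩
  simp only [← P.extEquivCohomologyClass.apply_eq_iff_eq,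
    ProjectiveResolution.extEquivCohomologyClass_extMk,
    ProjectiveResolution.extEquivCohomologyClass_zero,
    CochainComplex.HomComplex.CohomologyClass.mk_eq_zero_iff] at h
  rw [CochainComplex.HomComplex.Cocycle.toSingleMk_mem_coboundaries_iff _ _ _ _ _ 1 (by lia)] at h
  obtain ⟨g, hg⟩ := h
  have hX : IsZero (P.cochainComplex.X 1) :=
    CochainComplex.isZero_of_isStrictlyLE _ 0 _
  rw [hX.eq_zero_of_src g, comp_zero, ← comp_zero (f := (P.cochainComplexXIso (-0) 0).hom)] at hg
  exact ((cancel_epi _).mp hg).symm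

lemma exactAt_linearYonedaObj_iff_subsingleton_ext (R : Type*) [Ring R] [Linear R C]
    (P : ProjectiveResolution X) (Y : C) (n : ℕ) :
    (P.complex.linearYonedaObj R Y).ExactAt n ↔ Subsingleton (Abelian.Ext X Y n) := by
  have hsub : Subsingleton (Abelian.Ext X Y n) ↔
      ∀ (f : P.complex.X n ⟶ Y) (hf : P.complex.d (n + 1) n ≫ f = 0), P.extMk f _ rfl hf = 0 := by
    refine ⟨fun _ f hf => Subsingleton.elim _ _, fun h => subsingleton_of_forall_eq 0 fun α => ?_⟩
    obtain ⟨f, hf, rfl⟩ := P.extMk_surjective α _ rfl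
    exact h f hf
  rw [hsub]
  cases n with
  | zero =>
    rw [HomologicalComplex.exactAt_iff' _ 0 0 1 (by simp) (by simp),
      ShortComplex.moduleCat_exact_iff]
    refine forall₂_congr fun f hf =>
      Iff.trans ?_ (projectiveResolution_extMk_zero_eq_zero_iff P f hf).symm
    refine ⟨fun ⟨g, hg⟩ => hg.symm.trans ?_, fun h => ⟨0, (map_zero _).trans h.symm⟩⟩
    -- `0` counts as its own predecessor here, with zero differential.
    change P.complex.d 0 0 ≫ (show P.complex.X 0 ⟶ Y from g) = 0
    rw [P.complex.shape 0 0 (by simp), zero_comp]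
  | succ p =>
    rw [HomologicalComplex.exactAt_iff' _ p (p + 1) (p + 2) (by simp) (by simp),
      ShortComplex.moduleCat_exact_iff]
    exact forall₂_congr fun f hf => (P.extMk_eq_zero_iff f _ rfl hf p rfl).symm

lemma subsingleton_ext_obj_iff (R : Type*) [Ring R] [Linear R C] [EnoughProjectives C]
    (X Y : C) (n : ℕ) :
    Subsingleton (((Ext R C n).obj (Opposite.op X)).obj Y) ↔
      Subsingleton (Abelian.Ext X Y n) := by
  let P := projectiveResolution X
  rw [← exactAt_linearYonedaObj_iff_subsingleton_ext R P,
    HomologicalComplex.exactAt_iff_isZero_homology, ← (P.isoExt n Y).isZero_iff,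
    ModuleCat.isZero_iff_subsingleton]

lemma subsingleton_ext_of_retract (K : C) (r : Retract X Y) (n : ℕ)
    [Subsingleton (Abelian.Ext K Y n)] : Subsingleton (Abelian.Ext K X n) :=
  AddCommGrpCat.subsingleton_of_isZero <|
    .of_mono (r.map (Abelian.extFunctorObj K n)).i <|
      AddCommGrpCat.isZero_of_subsingleton (.of (Abelian.Ext K Y n))

lemma exists_not_subsingleton_ext_X₃ (K : C) {S : ShortComplex C} (hS : S.ShortExact) {n : ℕ}
    (hK : ¬ Subsingleton (Abelian.Ext K S.X₁ n))
    (hf : ∀ α : Abelian.Ext K S.X₁ n, α.comp (Abelian.Ext.mk₀ S.f) (add_zero n) = 0) :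
    ∃ m, m + 1 = n ∧ ¬ Subsingleton (Abelian.Ext K S.X₃ m) := by
  cases n with
  | zero =>
    refine absurd (subsingleton_of_forall_eq 0 fun α => ?_) hK
    have := hS.mono_f
    obtain ⟨g, rfl⟩ := (Abelian.Ext.mk₀_bijective K S.X₁).2 α
    have hg : g ≫ S.f = 0 := by
      rw [← Abelian.Ext.mk₀_eq_zero_iff, ← Abelian.Ext.mk₀_comp_mk₀, hf]
    rw [zero_of_comp_mono S.f hg, Abelian.Ext.mk₀_zero]
  | succ m =>
    refine ⟨m, rfl, fun _ => hK <| subsingleton_of_forall_eq 0 fun α => ?_⟩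
    obtain ⟨β, rfl⟩ := Abelian.Ext.covariant_sequence_exact₁ K hS α (hf α) rfl
    rw [Subsingleton.elim β 0, Abelian.Ext.zero_comp]

end Ext

lemma projectiveDimension_X₁_eq_of_projective_X₂ {C : Type*} [Category* C] [Abelian C]
    {S : ShortComplex C} (hS : S.ShortExact) [Projective S.X₂] {n : ℕ}
    (h : projectiveDimension S.X₃ = (n + 1 : ℕ)) :
    projectiveDimension S.X₁ = n := by
  apply le_antisymm
  · rw [projectiveDimension_le_iff]
    exact hS.hasProjectiveDimensionLT_X₁ (n + 1) inferInstance
      ((projectiveDimension_le_iff _ _).mp h.le)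
  · rw [projectiveDimension_ge_iff]
    exact fun h₁ => (projectiveDimension_ge_iff _ _).mp h.ge
      (hS.hasProjectiveDimensionLT_X₃ n h₁ inferInstance)

section Module

open IsLocalRing TensorProduct

lemma mem_smul_top_of_range_le_smul_top {R M N : Type*} [CommRing R]
    [AddCommGroup M] [Module R M] [Module.Free R M] [Module.Finite R M]
    [AddCommGroup N] [Module R N] {I : Ideal R} {f : M →ₗ[R] N}
    (hf : LinearMap.range f ≤ I • ⊤) : f ∈ I • (⊤ : Submodule R (M →ₗ[R] N)) := by
  let b := Module.Free.chooseBasis R M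
  have hsum : f = ∑ j, LinearMap.smulRightₗ (b.coord j) (f (b j)) := by
    refine b.ext fun i => ?_
    simp [Finsupp.single_apply]
  have hmap (φ : M →ₗ[R] R) {y : N} (hy : y ∈ I • (⊤ : Submodule R N)) :
      LinearMap.smulRightₗ φ y ∈ I • (⊤ : Submodule R (M →ₗ[R] N)) := by
    have hφ := Submodule.mem_map_of_mem (f := LinearMap.smulRightₗ φ) hy
    rw [Submodule.map_smul''] at hφ
    exact Submodule.smul_mono le_rfl le_top hφ
  rw [hsum]
  exact sum_mem fun j _ => hmap _ (hf ⟨b j, rfl⟩)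

variable (A : Type*) [CommRing A] [IsLocalRing A]

lemma exists_surjective_ker_le_maximalIdeal_smul_top (M : Type*) [AddCommGroup M] [Module A M]
    [Module.Finite A M] :
    ∃ (n : ℕ) (f : (Fin n → A) →ₗ[A] M), Function.Surjective f ∧
      LinearMap.ker f ≤ maximalIdeal A • ⊤ := by
  let b := Module.finBasis (ResidueField A) (ResidueField A ⊗[A] M)
  choose v hv using fun i =>
    TensorProduct.mk_surjective A M (ResidueField A) residue_surjective (b i)
  refine ⟨_, Fintype.linearCombination A v, ?_, fun x hx => ?_⟩
  · rw [← LinearMap.range_eq_top, Fintype.range_linearCombination]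
    exact span_eq_top_of_tmul_eq_basis v b hv
  · have hzero : ∑ i, residue A (x i) • b i = 0 := by
      have h := congrArg (TensorProduct.mk A (ResidueField A) M 1) (LinearMap.mem_ker.mp hx)
      simp only [Fintype.linearCombination_apply, map_sum, map_smul, hv, map_zero] at h
      simpa only [← ResidueField.algebraMap_eq, algebraMap_smul] using h
    have hmem (i) : x i ∈ maximalIdeal A :=
      (residue_eq_zero_iff _).mp (Fintype.linearIndependent_iff.mp b.linearIndependent _ hzero i)
    rw [pi_eq_sum_univ' x]
    exact sum_mem fun i _ => Submodule.smul_mem_smul (hmem i) trivial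

lemma annihilator_residueField : Module.annihilator A (ResidueField A) = maximalIdeal A :=
  Ideal.annihilator_quotient

end Module

section ModuleCat

lemma projectiveDimension_ne_bot_iff_nontrivial {R : Type*} [Ring R]
    (M : ModuleCat.{v} R) : projectiveDimension M ≠ ⊥ ↔ Nontrivial M := by
  rw [Ne, projectiveDimension_eq_bot_iff, ModuleCat.isZero_iff_subsingleton,
    not_subsingleton_iff_nontrivial]

lemma ext_comp_mk₀_eq_zero_of_mem_annihilator_smul_top {R : Type*} [CommRing R] [Small.{v} R]
    {K M N : ModuleCat.{v} R} (f : M ⟶ N)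
    (hf : f.hom ∈ Module.annihilator R K • (⊤ : Submodule R (M →ₗ[R] N)))
    {n : ℕ} (α : Abelian.Ext K M n) :
    α.comp (Abelian.Ext.mk₀ f) (add_zero n) = 0 := by
  suffices h : ∀ g ∈ Module.annihilator R K • (⊤ : Submodule R (M →ₗ[R] N)),
      α.comp (Abelian.Ext.mk₀ (ModuleCat.ofHom g)) (add_zero n) = 0 from h _ hf
  intro g hg
  induction hg using Submodule.smul_induction_on' with
  | smul r hr g _ =>
    have hK : r • 𝟙 K = 0 := by ext x; exact Module.mem_annihilator.mp hr x
    have hα : r • α = 0 := by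
      rw [← Abelian.Ext.mk₀_id_comp α, ← Abelian.Ext.smul_comp, ← Abelian.Ext.mk₀_smul, hK,
        Abelian.Ext.mk₀_zero, Abelian.Ext.zero_comp]
    have hofHom : ModuleCat.ofHom (r • g) = r • ModuleCat.ofHom g := rfl
    rw [hofHom, Abelian.Ext.mk₀_smul, Abelian.Ext.comp_smul,
      ← Abelian.Ext.smul_comp, hα, Abelian.Ext.zero_comp]
  | add g _ g' _ h h' => simp [ModuleCat.ofHom_add, Abelian.Ext.mk₀_add, h, h']

section

variable {R : Type u} [CommRing R] (K F : ModuleCat.{u} R) [Module.Free R F] (n : ℕ)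

lemma subsingleton_ext_of_free [Module.Finite R F]
    [Subsingleton (Abelian.Ext K (ModuleCat.of R R) n)] : Subsingleton (Abelian.Ext K F n) := by
  let b := (Module.Free.chooseBasis R F).reindex (Fintype.equivFin _)
  let Y (_ : Fin (Fintype.card (Module.Free.ChooseBasisIndex R F))) := ModuleCat.of R R
  have : Subsingleton (Abelian.Ext K (Limits.biproduct Y) n) :=
    (Abelian.Ext.addEquivBiproduct K (Limits.biproduct.isBilimit Y) n).subsingleton
  let e : F ≅ ModuleCat.of R (∀ j, Y j) := b.equivFun.toModuleIso
  exact subsingleton_ext_of_retract K (e.trans (ModuleCat.biproductIsoPi Y).symm).retract n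

lemma subsingleton_ext_self_of_free [Nontrivial F] [Subsingleton (Abelian.Ext K F n)] :
    Subsingleton (Abelian.Ext K (ModuleCat.of R R) n) := by
  let b := Module.Free.chooseBasis R F
  obtain ⟨j⟩ := b.index_nonempty
  refine subsingleton_ext_of_retract K (Y := F)
    ⟨ModuleCat.ofHom (LinearMap.toSpanSingleton R F (b j)), ModuleCat.ofHom (b.coord j), ?_⟩ n
  ext
  simp

end

end ModuleCat

section AuslanderBuchsbaum

open IsLocalRing

variable {A : Type u} [CommRing A] [IsLocalRing A]

lemma free_of_projectiveDimension_eq_zero (M : ModuleCat.{v} A) [Small.{v} A] [Module.Finite A M]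
    (hM : projectiveDimension M = 0) : Module.Free A M := by
  have : Module.Projective A M :=
    (IsProjective.iff_projective M).mpr ((projectiveDimension_eq_zero_iff M).mp hM).1
  exact Module.free_of_flat_of_isLocalRing

theorem exists_not_subsingleton_ext_of_projectiveDimension_eq [IsNoetherianRing A]
    {K : ModuleCat.{u} A} (hK : maximalIdeal A ≤ Module.annihilator A K) {d : ℕ}
    (hlt : ∀ i < d, Subsingleton (Abelian.Ext K (ModuleCat.of A A) i))
    (hd : ¬ Subsingleton (Abelian.Ext K (ModuleCat.of A A) d))
    (M : ModuleCat.{u} A) [Module.Finite A M] {n : ℕ} (hM : projectiveDimension M = n) :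
    ∃ e, e + n = d ∧ ¬ Subsingleton (Abelian.Ext K M e) := by
  induction n generalizing M with
  | zero =>
    have := free_of_projectiveDimension_eq_zero M hM
    have := (projectiveDimension_ne_bot_iff_nontrivial M).mp (hM ▸ WithBot.coe_ne_bot)
    exact ⟨d, rfl, fun _ => hd (subsingleton_ext_self_of_free K M d)⟩
  | succ n ih =>
    obtain ⟨m, f, hf, hker⟩ := exists_surjective_ker_le_maximalIdeal_smul_top A M
    let S : ShortComplex (ModuleCat.{u} A) := f.shortComplexKer
    have hS : S.ShortExact := LinearMap.shortExact_shortComplexKer hf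
    have : Projective S.X₂ := (IsProjective.iff_projective (Fin m → A)).mp inferInstance
    have : Module.Finite A S.X₁ := inferInstanceAs (Module.Finite A (LinearMap.ker f))
    have hX₁ : projectiveDimension S.X₁ = n := projectiveDimension_X₁_eq_of_projective_X₂ hS hM
    obtain ⟨e, rfl, he⟩ := ih S.X₁ hX₁
    have hzero (α : Abelian.Ext K S.X₁ e) :
        α.comp (Abelian.Ext.mk₀ S.f) (add_zero e) = 0 := by
      cases n with
      | zero =>
        have := free_of_projectiveDimension_eq_zero S.X₁ hX₁
        have hrange : LinearMap.range S.f.hom ≤ maximalIdeal A • ⊤ :=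
          (LinearMap.ker f).range_subtype.trans_le hker
        exact ext_comp_mk₀_eq_zero_of_mem_annihilator_smul_top S.f
          (Submodule.smul_mono_left hK (mem_smul_top_of_range_le_smul_top hrange)) α
      | succ n =>
        have := hlt e (by lia)
        exact (subsingleton_ext_of_free K (ModuleCat.of A (Fin m → A)) e).elim _ _
    obtain ⟨e', rfl, he'⟩ := exists_not_subsingleton_ext_X₃ K hS he hzero
    exact ⟨e', by lia, he'⟩

end AuslanderBuchsbaum

section ProjDim

variable {A : Type u} [CommRing A] (M : ModuleCat.{u} A)

lemma projDim_le_natCast_iff (n : ℕ) : projDim A M ≤ n ↔ HasProjectiveDimensionLE M n := by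
  refine ⟨fun h => .mk fun i hi N α => ?_, fun h => sInf_le fun N i hi => ?_⟩
  · have hmem := csInf_mem (s := {n : ℕ∞ | ∀ (N : ModuleCat.{u} A) (i : ℕ), n < (i : ℕ∞) →
      Subsingleton (extGroup A M N i)}) ⟨⊤, fun _ _ hi => absurd hi not_top_lt⟩
    have := (subsingleton_ext_obj_iff A M N i).mp (hmem N i (h.trans_lt (mod_cast hi)))
    exact Subsingleton.elim _ _
  · rw [subsingleton_ext_obj_iff]
    exact HasProjectiveDimensionLT.subsingleton M (n + 1) i (mod_cast hi) N

lemma projectiveDimension_eq_projDim [Nontrivial M] : projectiveDimension M = projDim A M := by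
  obtain ⟨d, hd⟩ := WithBot.ne_bot_iff_exists.mp
    ((projectiveDimension_ne_bot_iff_nontrivial M).mpr inferInstance)
  rw [← hd, WithBot.coe_inj]
  refine eq_of_forall_ge_iff fun n => ?_
  cases n with
  | top => simp
  | coe n =>
    rw [projDim_le_natCast_iff, ← projectiveDimension_le_iff, ← hd]
    exact WithBot.coe_le_coe.symm

end ProjDim

/-- The small finitistic projective dimension of `A`: the supremum of the finite projective
dimensions of nonzero finitely generated `A`-modules. -/
noncomputable def smallFinitisticProjDim (A : Type u) [CommRing A] : ℕ∞ :=
  sSup {d : ℕ∞ | ∃ M : ModuleCat.{u} A, Nontrivial M ∧ Module.Finite A M ∧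
    projDim A M ≠ ⊤ ∧ projDim A M = d}

section Depth

open IsLocalRing

variable (A : Type u) [CommRing A] [IsLocalRing A]

lemma natCast_le_ringDepth_iff (n : ℕ) : n ≤ ringDepth A ↔
    ∀ i < n, Subsingleton (Abelian.Ext (ModuleCat.of A (ResidueField A)) (ModuleCat.of A A) i) := by
  simp only [ringDepth, le_sInf_iff, subsingleton_ext_obj_iff]
  refine ⟨fun h i hi => ?_, ?_⟩
  · by_contra hne
    exact hi.not_ge (mod_cast h i ⟨i, rfl, hne⟩)
  · rintro h _ ⟨i, rfl, hne⟩
    exact_mod_cast not_lt.mp (mt (h i) hne)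

variable [IsNoetherianRing A]

theorem projDim_le_ringDepth (M : ModuleCat.{u} A) [Nontrivial M] [Module.Finite A M]
    (hM : projDim A M ≠ ⊤) : projDim A M ≤ ringDepth A := by
  obtain ⟨n, hn⟩ := ENat.ne_top_iff_exists.mp hM
  obtain hdepth | hdepth := eq_or_ne (ringDepth A) ⊤
  · exact hdepth ▸ le_top
  obtain ⟨d, hd⟩ := ENat.ne_top_iff_exists.mp hdepth
  have hlt := (natCast_le_ringDepth_iff A d).mp hd.le
  have hne : ¬ Subsingleton
      (Abelian.Ext (ModuleCat.of A (ResidueField A)) (ModuleCat.of A A) d) := fun h => by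
    have hle : (d + 1 : ℕ) ≤ ringDepth A := (natCast_le_ringDepth_iff A (d + 1)).mpr
      (Nat.forall_lt_succ_right.mpr ⟨hlt, h⟩)
    rw [← hd, Nat.cast_le] at hle
    lia
  obtain ⟨e, rfl, -⟩ := exists_not_subsingleton_ext_of_projectiveDimension_eq
    (annihilator_residueField A).ge hlt hne M
    ((projectiveDimension_eq_projDim M).trans (congrArg _ hn.symm))
  rw [← hn, ← hd, Nat.cast_le]
  lia

theorem exists_projDim_eq_of_natCast_le_ringDepth {n : ℕ} (hn : n ≤ ringDepth A) :
    ∃ M : ModuleCat.{u} A, Nontrivial M ∧ Module.Finite A M ∧ projDim A M = n := by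
  have hsupp : Module.support A (ResidueField A) = PrimeSpectrum.zeroLocus (maximalIdeal A) := by
    rw [Module.support_eq_zeroLocus, annihilator_residueField]
  obtain ⟨rs, rfl, -, hrs⟩ := ModuleCat.exists_isRegular_of_exists_subsingleton_ext
    (maximalIdeal A) n (ModuleCat.of A A)
    (by simpa using lt_top_iff_ne_top.mpr (maximalIdeal.isMaximal A).ne_top)
    (ModuleCat.of A (ResidueField A)) hsupp ((natCast_le_ringDepth_iff A n).mp hn)
  let M := ModuleCat.of A (Shrink.{u} (A ⧸ Ideal.ofList rs))
  have hM : projectiveDimension M = rs.length :=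
    ModuleCat.projectiveDimension_quotient_eq_length.{u} rs hrs
  have : Nontrivial M := (projectiveDimension_ne_bot_iff_nontrivial M).mp (hM ▸ WithBot.coe_ne_bot)
  refine ⟨M, this, .equiv (Shrink.linearEquiv A (A ⧸ Ideal.ofList rs)).symm, ?_⟩
  rw [projectiveDimension_eq_projDim] at hM
  exact WithBot.coe_inj.mp hM

theorem smallFinitisticProjDim_eq_ringDepth : smallFinitisticProjDim A = ringDepth A := by
  refine le_antisymm (sSup_le ?_) (ENat.forall_natCast_le_iff_le.mp fun n hn => ?_)
  · rintro _ ⟨M, _, _, hM, rfl⟩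
    exact projDim_le_ringDepth A M hM
  · obtain ⟨M, hnontrivial, hfinite, hM⟩ := exists_projDim_eq_of_natCast_le_ringDepth A hn
    exact le_sSup ⟨M, hnontrivial, hfinite, hM ▸ ENat.natCast_ne_top n, hM⟩

end Depth

theorem cohenMacaulay_iff_smallFinitisticProjDim_eq_krullDim
    (A : Type u) [CommRing A] [IsNoetherianRing A] [IsLocalRing A] :
    ((ringDepth A : WithBot ℕ∞) = ringKrullDim A) ↔
      (((sSup {d : ℕ∞ | ∃ M : ModuleCat.{u} A, Nontrivial M ∧ Module.Finite A M ∧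
        projDim A M ≠ ⊤ ∧ projDim A M = d} : ℕ∞) : WithBot ℕ∞) = ringKrullDim A) := by
  rw [← smallFinitisticProjDim_eq_ringDepth, smallFinitisticProjDim]
end
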